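/- Let A, B be n×n Hermitian complex matrices forming a definite pair, i.e., there exists c > 0 such that for every x ∈ ℂⁿ with ‖x‖ = 1, (Re(x*Ax))² + (Re(x*Bx))² ≥ c. Then there exists an invertible complex matrix U and real vectors α, β ∈ ℝⁿ such that U*AU = diag(α₁,…,αₙ) and U*BU = diag(β₁,…,βₙ). -/

import Mathlib

open Matrix

def qf {n : ℕ} (T : Matrix (Fin n) (Fin n) ℂ) (x : Fin n → ℂ) : ℂ := star x ⬝ᵥ T *ᵥ x

lemma qf_smul {n : ℕ} (T : Matrix (Fin n) (Fin n) ℂ) (x : Fin n → ℂ) (u : ℝ) :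
    qf T ((u : ℂ) • x) = (u : ℂ) ^ 2 * qf T x := by
  simp [qf, mulVec_smul, smul_dotProduct]
  ring

lemma exists_phase (w : ℂ) : ∃ v : ℂ, star v * v = 1 ∧ (v * w).im = 0 := by
  by_cases hw : w = 0
  · exact ⟨1, by simp, by simp [hw]⟩
  · have h : (‖w‖ : ℂ) ≠ 0 := by simpa using hw
    refine ⟨star w / ‖w‖, ?_, ?_⟩
    · have := Complex.mul_conj' w
      simp
      field_simp
      rw [this]
    · have := Complex.conj_mul' w
      have e : star w / (‖w‖ : ℂ) * w = (‖w‖ : ℝ) := by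
        simp only [Complex.star_def]
        field_simp
        rw [this]
      rw [e]; simp

lemma cross {n : ℕ} (T : Matrix (Fin n) (Fin n) ℂ) (x y : Fin n → ℂ) (p : ℂ) (hp : p ≠ 0) :
    ∃ v : ℂ, star v * v = 1 ∧ ∃ k : ℝ, 0 ≤ k ∧
      ∀ u : ℝ, qf T ((u : ℂ) • x + v • y) = (u : ℂ) ^ 2 * qf T x + u * k * p + qf T y := by
  have main : ∃ v : ℂ, star v * v = 1 ∧ ∃ k : ℝ, 
      v * (star x ⬝ᵥ T *ᵥ y) + star v * (star y ⬝ᵥ T *ᵥ x) = k * p := by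
    obtain ⟨v, hv, him⟩ := exists_phase
      ((star x ⬝ᵥ T *ᵥ y) * star p - star ((star y ⬝ᵥ T *ᵥ x) * star p))
    refine ⟨v, hv, ((v * (star x ⬝ᵥ T *ᵥ y) + star v * (star y ⬝ᵥ T *ᵥ x)) / p).re, ?_⟩
    generalize (star x ⬝ᵥ T *ᵥ y) = a at *
    generalize (star y ⬝ᵥ T *ᵥ x) = b at *
    rw [← div_eq_iff hp]
    apply Complex.ext
    · simp
    · simp only [Complex.ofReal_im, Complex.div_im]
      rw [← sub_div]
      apply div_eq_zero_iff.2 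
      left
      simp at him ⊢
      linarith
  have expand : ∀ v : ℂ, star v * v = 1 → ∀ u : ℝ, qf T ((u : ℂ) • x + v • y) =
      (u : ℂ) ^ 2 * qf T x + u * (v * (star x ⬝ᵥ T *ᵥ y) + star v * (star y ⬝ᵥ T *ᵥ x)) 
        + qf T y := by
    intro v hv u
    simp only [qf, mulVec_add, mulVec_smul, add_dotProduct, dotProduct_add, star_add, star_smul,
      smul_dotProduct, dotProduct_smul, smul_eq_mul, Complex.star_def, Complex.conj_ofReal] at hv ⊢
    linear_combination (star y ⬝ᵥ T *ᵥ y) * hv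
  obtain ⟨v, hv, k, hk⟩ := main
  rcases le_total 0 k with h | h
  · exact ⟨v, hv, k, h, fun u => by rw [expand v hv, hk]; ring⟩
  · refine ⟨-v, by simpa using hv, -k, by linarith, fun u => ?_⟩
    rw [expand (-v) (by simpa using hv)]
    simp only [star_neg]
    push_cast
    linear_combination (-(u:ℂ)) * hk

lemma qf_zero {n : ℕ} (T : Matrix (Fin n) (Fin n) ℂ)
    (x y : Fin n → ℂ) (hx : qf T x ≠ 0) (d : ℝ) (hd : 0 < d) (hy : qf T y = - (d * qf T x)) :
    ∃ z, z ≠ 0 ∧ qf T z = 0 := by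
  obtain ⟨v, hv, k, hk, H⟩ := cross T x y (qf T x) hx
  set s := Real.sqrt (k ^ 2 + 4 * d)
  have hs : s ^ 2 = k ^ 2 + 4 * d := Real.sq_sqrt (by positivity)
  let u : ℝ := (-k + s) / 2
  have hu : u ^ 2 + u * k - d = 0 := by simp only [u]; linear_combination hs / 4
  have h0 : qf T ((u : ℂ) • x + v • y) = 0 := by
    rw [H, hy]
    have : (u : ℂ) ^ 2 + u * k - d = 0 := by exact_mod_cast hu
    linear_combination (qf T x) * this
  refine ⟨_, ?_, h0⟩
  intro hz
  have h1 : y = -((star v * u) • x) := by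
    have := congrArg (fun t => star v • t) hz
    simp only [smul_add, smul_smul, hv, one_smul, smul_zero] at this
    rw [← sub_eq_zero, sub_neg_eq_add, add_comm]; exact this
  have h2 : qf T y = (u : ℂ) ^ 2 * qf T x := by
    rw [h1]
    simp only [Complex.star_def] at hv
    simp [qf, mulVec_smul, mulVec_neg]
    linear_combination ((u:ℂ) ^ 2 * (star x ⬝ᵥ T *ᵥ x)) * hv
  rw [hy] at h2
  have h3 : ((u : ℂ) ^ 2 + d) * qf T x = 0 := by linear_combination -h2
  rcases mul_eq_zero.1 h3 with h | h
  · have : u ^ 2 + d = 0 := by exact_mod_cast h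
    nlinarith
  · exact hx h

/-- numerical range -/
def nr {n : ℕ} (T : Matrix (Fin n) (Fin n) ℂ) : Set ℂ :=
  (fun x : EuclideanSpace ℂ (Fin n) => qf T (x : Fin n → ℂ)) '' Metric.sphere 0 1

lemma self_dot {n : ℕ} (x : EuclideanSpace ℂ (Fin n)) :
    star (x : Fin n → ℂ) ⬝ᵥ (x : Fin n → ℂ) = (‖x‖ : ℂ) ^ 2 := by
  have := inner_self_eq_norm_sq_to_K (𝕜 := ℂ) x
  rw [EuclideanSpace.inner_eq_star_dotProduct, dotProduct_comm] at this
  exact this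

lemma qf_shift {n : ℕ} (T : Matrix (Fin n) (Fin n) ℂ) (p : ℂ) (x : EuclideanSpace ℂ (Fin n)) :
    qf (T - p • 1) (x : Fin n → ℂ) = qf T (x : Fin n → ℂ) - p * (‖x‖ : ℂ) ^ 2 := by
  rw [← self_dot]
  simp [qf, sub_mulVec, smul_mulVec]

lemma nr_compact {n : ℕ} (T : Matrix (Fin n) (Fin n) ℂ) : IsCompact (nr T) := by
  apply (isCompact_sphere _ _).image
  unfold qf
  simp only [dotProduct, mulVec]
  fun_prop

lemma mem_nr {n : ℕ} (T : Matrix (Fin n) (Fin n) ℂ) (x : EuclideanSpace ℂ (Fin n)) (hx : x ≠ 0)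
    (p : ℂ) (h : qf T (x : Fin n → ℂ) = p * (‖x‖ : ℂ) ^ 2) : p ∈ nr T := by
  have h0 : ‖x‖ ≠ 0 := by simpa using hx
  have h1 : (‖x‖ : ℂ) ≠ 0 := by exact_mod_cast h0
  refine ⟨((‖x‖⁻¹ : ℝ) : ℂ) • x, ?_, ?_⟩
  · simp [norm_smul, h0]
  · simp only [WithLp.ofLp_smul]
    rw [qf_smul, h]
    push_cast
    field_simp

lemma nr_convex {n : ℕ} (T : Matrix (Fin n) (Fin n) ℂ) : Convex ℝ (nr T) := by
  rintro _ ⟨x, hx, rfl⟩ _ ⟨y, hy, rfl⟩ s t hs ht hst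
  have hx1 : ‖x‖ = 1 := by simpa using hx
  have hy1 : ‖y‖ = 1 := by simpa using hy
  rcases hs.eq_or_lt with rfl | hs
  · obtain rfl : t = 1 := by linarith
    exact ⟨y, hy, by simp⟩
  by_cases hab : qf T (x : Fin n → ℂ) = qf T (y : Fin n → ℂ)
  · refine ⟨x, hx, ?_⟩
    simp only [← hab]
    rw [← add_smul, hst, one_smul]
  rcases ht.eq_or_lt with rfl | ht
  · obtain rfl : s = 1 := by linarith
    exact ⟨x, hx, by simp⟩
  simp only [Complex.real_smul]
  set p : ℂ := s * qf T (x : Fin n → ℂ) + t * qf T (y : Fin n → ℂ) with hp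
  have hst' : (s : ℂ) + t = 1 := by exact_mod_cast hst
  have e1 : qf (T - p • 1) (x : Fin n → ℂ) = t * (qf T (x : Fin n → ℂ) - qf T (y : Fin n → ℂ)) := by
    rw [qf_shift, hx1, hp]; push_cast
    linear_combination (-qf T (x : Fin n → ℂ)) * hst'
  have e2 : qf (T - p • 1) (y : Fin n → ℂ) = -(s * (qf T (x : Fin n → ℂ) - qf T (y : Fin n → ℂ))) := by
    rw [qf_shift, hy1, hp]; push_cast
    linear_combination (-qf T (y : Fin n → ℂ)) * hst'
  have ht' : (t : ℂ) ≠ 0 := by exact_mod_cast ht.ne'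
  obtain ⟨z, hz, hz0⟩ := qf_zero (T - p • 1) x y
    (by rw [e1]; exact mul_ne_zero ht' (sub_ne_zero.2 hab)) (s / t) (by positivity)
    (by rw [e1, e2]; push_cast; field_simp)
  apply mem_nr T (WithLp.toLp 2 z) (by simpa using hz)
  have := qf_shift T p (WithLp.toLp 2 z)
  rw [show qf (T - p • 1) (WithLp.toLp 2 z : EuclideanSpace ℂ (Fin n)).ofLp = 0 from hz0] at this
  linear_combination -this

open scoped ComplexOrder MatrixOrder in
lemma posDef_diag {n : ℕ} (M C : Matrix (Fin n) (Fin n) ℂ) (hMH : M.IsHermitian)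
    (hMp : ∀ x : Fin n → ℂ, x ≠ 0 → 0 < (star x ⬝ᵥ M *ᵥ x).re) (hC : C.IsHermitian) :
    ∃ (U : Matrix (Fin n) (Fin n) ℂ) (γ : Fin n → ℝ), IsUnit U ∧ Uᴴ * M * U = 1 ∧
      Uᴴ * C * U = Matrix.diagonal (fun i => (γ i : ℂ)) := by
  have hM : M.PosDef := by
    rw [posDef_iff_dotProduct_mulVec]
    refine ⟨hMH, fun x hx => ?_⟩
    have him := hMH.im_star_dotProduct_mulVec_self x
    rw [Complex.pos_iff]
    exact ⟨hMp x hx, him.symm⟩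
  obtain ⟨L, hL⟩ := CStarAlgebra.nonneg_iff_eq_star_mul_self.1 hM.posSemidef.nonneg
  rw [Matrix.star_eq_conjTranspose] at hL
  have hLu : IsUnit L := by
    have := hM.isUnit
    rw [Matrix.isUnit_iff_isUnit_det] at this ⊢
    rw [hL, det_mul] at this
    exact (IsUnit.mul_iff.1 this).2
  have hLd := (Matrix.isUnit_iff_isUnit_det _).1 hLu
  have hC' : ((L⁻¹)ᴴ * C * L⁻¹).IsHermitian := isHermitian_conjTranspose_mul_mul _ hC
  let V : Matrix (Fin n) (Fin n) ℂ := hC'.eigenvectorUnitary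
  have hV : Vᴴ * V = 1 := Unitary.coe_star_mul_self hC'.eigenvectorUnitary
  have hVu : IsUnit V := by
    exact ⟨⟨V, Vᴴ, mul_eq_one_comm.1 hV, hV⟩, rfl⟩
  have h1 : (L⁻¹)ᴴ * Lᴴ = 1 := by
    rw [← conjTranspose_mul, mul_nonsing_inv _ hLd, conjTranspose_one]
  have h2 : L * L⁻¹ = 1 := mul_nonsing_inv _ hLd
  refine ⟨L⁻¹ * V, hC'.eigenvalues, ?_, ?_, ?_⟩
  · exact (Matrix.isUnit_nonsing_inv_iff.2 hLu).mul hVu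
  · rw [hL, conjTranspose_mul]
    calc _ = Vᴴ * (((L⁻¹)ᴴ * Lᴴ) * (L * L⁻¹)) * V := by simp only [Matrix.mul_assoc]
      _ = 1 := by rw [h1, h2]; simpa using hV
  · have := hC'.conjStarAlgAut_star_eigenvectorUnitary
    rw [Unitary.conjStarAlgAut_star_apply] at this
    rw [conjTranspose_mul]
    calc _ = Vᴴ * ((L⁻¹)ᴴ * C * L⁻¹) * V := by simp only [Matrix.mul_assoc]
      _ = _ := this

/-- Paper Theorem 4.6 (Stewart, Corollary VI.1.19): a definite Hermitian pair (A, B)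
can be simultaneously diagonalized by congruence with real diagonal factors. -/
theorem definite_pair_simultaneous_diagonalization {n : ℕ}
    (A B : Matrix (Fin n) (Fin n) ℂ)
    (hA : A.IsHermitian) (hB : B.IsHermitian)
    (hdef : ∃ c > (0 : ℝ), ∀ x : EuclideanSpace ℂ (Fin n), ‖x‖ = 1 →
      c ≤ (star (x : Fin n → ℂ) ⬝ᵥ A.mulVec (x : Fin n → ℂ)).re ^ 2 +
          (star (x : Fin n → ℂ) ⬝ᵥ B.mulVec (x : Fin n → ℂ)).re ^ 2) :
    ∃ (U : Matrix (Fin n) (Fin n) ℂ) (α β : Fin n → ℝ),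
      IsUnit U ∧
      Uᴴ * A * U = Matrix.diagonal (fun i => (α i : ℂ)) ∧
      Uᴴ * B * U = Matrix.diagonal (fun i => (β i : ℂ)) := by
  obtain ⟨c, hc, hdef⟩ := hdef
  have hre : ∀ x : Fin n → ℂ, (qf (A + Complex.I • B) x) =
      ((star x ⬝ᵥ A *ᵥ x).re : ℂ) + ((star x ⬝ᵥ B *ᵥ x).re : ℂ) * Complex.I := by
    intro x
    have a := hA.im_star_dotProduct_mulVec_self x
    have b := hB.im_star_dotProduct_mulVec_self x
    simp only [qf, add_mulVec, smul_mulVec, dotProduct_add, dotProduct_smul, smul_eq_mul]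
    simp only [RCLike.im_to_complex] at a b
    apply Complex.ext <;> simp [a, b]
  have h0 : (0 : ℂ) ∉ nr (A + Complex.I • B) := by
    rintro ⟨x, hx, h⟩
    have := hdef x (by simpa using hx)
    simp only [hre] at h
    have r := congrArg Complex.re h
    have i := congrArg Complex.im h
    simp only [Complex.add_re, Complex.add_im, Complex.ofReal_re, Complex.ofReal_im,
      Complex.mul_re, Complex.mul_im, Complex.I_re, Complex.I_im, Complex.zero_re,
      Complex.zero_im] at r i
    simp only [mul_zero, mul_one, zero_mul, sub_zero, add_zero, zero_add] at r i
    rw [r, i] at this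
    norm_num at this
    linarith
  obtain ⟨f, w, hw, hf⟩ := geometric_hahn_banach_point_closed (nr_convex _)
    (nr_compact (A + Complex.I • B)).isClosed h0
  rw [map_zero] at hw
  have hfz : ∀ a b : ℝ, f ((a : ℂ) + b * Complex.I) = a * f 1 + b * f Complex.I := by
    intro a b
    have : (a : ℂ) + b * Complex.I = a • (1 : ℂ) + b • Complex.I := by simp
    rw [this, map_add, map_smul, map_smul]; rfl
  generalize f 1 = s at hfz
  generalize f Complex.I = t at hfz
  have hsm : ∀ (r : ℝ) (X : Matrix (Fin n) (Fin n) ℂ), X.IsHermitian →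
      ((r : ℂ) • X).IsHermitian := by
    intro r X hX
    unfold Matrix.IsHermitian
    rw [conjTranspose_smul, hX.eq]; simp
  have hMH : ((s : ℂ) • A + (t : ℂ) • B).IsHermitian := (hsm s A hA).add (hsm t B hB)
  have hCH : (((-t : ℝ) : ℂ) • A + (s : ℂ) • B).IsHermitian := by
    have := (hsm (-t) A hA).add (hsm s B hB)
    exact this
  by_cases hst : s ^ 2 + t ^ 2 = 0
  · -- then `n = 0`
    have hs : s = 0 := by nlinarith [sq_nonneg s, sq_nonneg t]
    have ht : t = 0 := by nlinarith [sq_nonneg s, sq_nonneg t]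
    have hn : IsEmpty (Fin n) := by
      by_contra hne
      rw [not_isEmpty_iff] at hne
      obtain ⟨i⟩ := hne
      have := hf _ ⟨EuclideanSpace.single i 1, by simp, rfl⟩
      simp only [hre] at this
      rw [hfz, hs, ht] at this
      linarith
    exact ⟨1, 0, 0, isUnit_one, Subsingleton.elim _ _, Subsingleton.elim _ _⟩
  have hM : ∀ x : Fin n → ℂ, x ≠ 0 →
      0 < (star x ⬝ᵥ ((s : ℂ) • A + (t : ℂ) • B) *ᵥ x).re := by
    intro x hx
    set y : EuclideanSpace ℂ (Fin n) := WithLp.toLp 2 x with hy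
    have hy0 : y ≠ 0 := by simpa [hy] using hx
    have hny : 0 < ‖y‖ := norm_pos_iff.2 hy0
    have hmem : qf (A + Complex.I • B) x / (‖y‖ : ℂ) ^ 2 ∈ nr (A + Complex.I • B) := by
      apply mem_nr _ y hy0
      have : (‖y‖ : ℂ) ≠ 0 := by exact_mod_cast hny.ne'
      field_simp
      rfl
    have h1 := hf _ hmem
    have e : qf (A + Complex.I • B) x / (‖y‖ : ℂ) ^ 2 = 
        (((star x ⬝ᵥ A *ᵥ x).re / ‖y‖ ^ 2 : ℝ) : ℂ) +
        (((star x ⬝ᵥ B *ᵥ x).re / ‖y‖ ^ 2 : ℝ) : ℂ) * Complex.I := by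
      rw [hre]; push_cast; ring
    rw [e, hfz] at h1
    have h2 : 0 < ((star x ⬝ᵥ A *ᵥ x).re * s + (star x ⬝ᵥ B *ᵥ x).re * t) / ‖y‖ ^ 2 := by
      refine (hw.trans h1).trans_eq ?_
      ring
    rw [div_pos_iff_of_pos_right (by positivity)] at h2
    simp only [add_mulVec, smul_mulVec, dotProduct_add, dotProduct_smul, smul_eq_mul,
      Complex.add_re, Complex.re_ofReal_mul]
    linarith
  obtain ⟨U, γ, hU, h1, h2⟩ := posDef_diag _ _ hMH hM hCH
  have hst' : ((s : ℂ) ^ 2 + (t : ℂ) ^ 2) ≠ 0 := by exact_mod_cast hst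
  have g1 : (s : ℂ) • (Uᴴ * A * U) + (t : ℂ) • (Uᴴ * B * U) = 1 := by
    rw [← h1]; simp [Matrix.mul_add, Matrix.add_mul]
  have g2 : (-t : ℂ) • (Uᴴ * A * U) + (s : ℂ) • (Uᴴ * B * U) =
      Matrix.diagonal (fun i => (γ i : ℂ)) := by
    rw [← h2]; simp [Matrix.mul_add, Matrix.add_mul]
  refine ⟨U, fun i => (s - t * γ i) / (s ^ 2 + t ^ 2), fun i => (t + s * γ i) / (s ^ 2 + t ^ 2),
    hU, ?_, ?_⟩
  · ext i j
    have k1 := congrFun (congrFun g1 i) j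
    have k2 := congrFun (congrFun g2 i) j
    simp only [Matrix.add_apply, Matrix.smul_apply, smul_eq_mul] at k1 k2
    by_cases hij : i = j
    · subst hij
      simp only [Matrix.one_apply_eq, Matrix.diagonal_apply_eq] at k1 k2 ⊢
      push_cast
      rw [eq_div_iff hst']
      linear_combination (s : ℂ) * k1 - (t : ℂ) * k2
    · simp only [Matrix.one_apply_ne hij, Matrix.diagonal_apply_ne _ hij] at k1 k2 ⊢
      apply (mul_eq_zero.1 _).resolve_left hst'
      linear_combination (s : ℂ) * k1 - (t : ℂ) * k2
  · ext i j
    have k1 := congrFun (congrFun g1 i) j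
    have k2 := congrFun (congrFun g2 i) j
    simp only [Matrix.add_apply, Matrix.smul_apply, smul_eq_mul] at k1 k2
    by_cases hij : i = j
    · subst hij
      simp only [Matrix.one_apply_eq, Matrix.diagonal_apply_eq] at k1 k2 ⊢
      push_cast
      rw [eq_div_iff hst']
      linear_combination (t : ℂ) * k1 + (s : ℂ) * k2
    · simp only [Matrix.one_apply_ne hij, Matrix.diagonal_apply_ne _ hij] at k1 k2 ⊢
      apply (mul_eq_zero.1 _).resolve_left hst'
      linear_combination (t : ℂ) * k1 + (s : ℂ) * k2
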